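/- Let G=(V,E) be an interval graph with an interval representation, and let k be the minimum size of a proper interval deletion set of G. Then there exists a proper interval deletion set D of G with k ≤ |D| ≤ 4k; moreover D can be chosen as the union of |D|/4 pairwise vertex-disjoint quadruples of vertices, each inducing a claw K_{1,3} in G. -/

import Mathlib

/-- The set `{c, a, b, d}` induces a claw `K_{1,3}` in `G` with center `c`
and leaves `a, b, d`. -/
def InducedClaw {V : Type*} (G : SimpleGraph V) (c a b d : V) : Prop :=
  G.Adj c a ∧ G.Adj c b ∧ G.Adj c d ∧
  ¬ G.Adj a b ∧ ¬ G.Adj a d ∧ ¬ G.Adj b d ∧ a ≠ b ∧ a ≠ d ∧ b ≠ d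

/-- `D` is a proper interval deletion set of `G`: `G ∖ D` contains no induced claw. -/
def ProperIntervalDeletionSet {V : Type*} (G : SimpleGraph V) (D : Set V) : Prop :=
  ¬ ∃ c a b d : V, c ∉ D ∧ a ∉ D ∧ b ∉ D ∧ d ∉ D ∧ InducedClaw G c a b d

/-!
A deletion set is a set of vertices meeting every induced claw. A minimum one contains a vertex of
each member of a family of pairwise disjoint induced claws, and these vertices are distinct, so the
family has at most `k` members. If the family is maximal, its union meets every induced claw, so the
union is itself a deletion set; it has four vertices per claw, so at most `4 * k` of them.
-/

/-- `T` is a transversal (hitting set) of the set family `𝒜`. The set `T` may be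
infinite, to match `ProperIntervalDeletionSet`. -/
def IsTransversal {α : Type*} (𝒜 : Set (Finset α)) (T : Set α) : Prop :=
  ∀ A ∈ 𝒜, ∃ x ∈ T, x ∈ A

/-- `F` is a packing in the set family `𝒜`: a finite subfamily of pairwise disjoint members. -/
structure IsPacking {α : Type*} (𝒜 : Set (Finset α)) (F : Finset (Finset α)) : Prop where
  subset : ↑F ⊆ 𝒜
  pairwiseDisjoint : (F : Set (Finset α)).PairwiseDisjoint id

section Packing

variable {α : Type*} {𝒜 : Set (Finset α)} {F : Finset (Finset α)}

theorem IsTransversal.empty_notMem {T : Set α} (hT : IsTransversal 𝒜 T) : ∅ ∉ 𝒜 := by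
  intro h
  obtain ⟨x, -, hx⟩ := hT ∅ h
  exact Finset.notMem_empty x hx

theorem isPacking_empty : IsPacking 𝒜 ∅ :=
  ⟨by simp, by simp⟩

namespace IsPacking

theorem card_le_card_of_isTransversal {T : Finset α} (hF : IsPacking 𝒜 F)
    (hT : IsTransversal 𝒜 ↑T) : F.card ≤ T.card :=
  Finset.card_le_card_of_forall_subsingleton (fun A x => x ∈ A) (fun A hA => hT A (hF.subset hA))
    fun x _ _ hA _ hB => hF.pairwiseDisjoint.elim_finset hA.1 hB.1 x hA.2 hB.2

protected theorem insert [DecidableEq α] {A : Finset α} (hF : IsPacking 𝒜 F) (hA : A ∈ 𝒜)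
    (hdisj : ∀ B ∈ F, Disjoint A B) : IsPacking 𝒜 (insert A F) where
  subset := by
    rw [Finset.coe_insert]
    exact Set.insert_subset hA hF.subset
  pairwiseDisjoint := by
    rw [Finset.coe_insert]
    exact hF.pairwiseDisjoint.insert fun B hB _ => hdisj B hB

theorem card_biUnion [DecidableEq α] {n : ℕ} (hF : IsPacking 𝒜 F) (h𝒜 : ∀ A ∈ 𝒜, A.card = n) :
    (F.biUnion id).card = n * F.card := by
  rw [Finset.card_biUnion hF.pairwiseDisjoint, mul_comm]
  exact Finset.sum_const_nat fun A hA => h𝒜 A (hF.subset hA)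

theorem isTransversal_biUnion_of_maximal [DecidableEq α] (hF : Maximal (IsPacking 𝒜) F)
    (h𝒜 : ∅ ∉ 𝒜) : IsTransversal 𝒜 ↑(F.biUnion id) := by
  intro A hA
  by_contra! hmiss
  have hdisj : ∀ B ∈ F, Disjoint A B := fun B hB => Finset.disjoint_right.2 fun x hxB =>
    hmiss x (Finset.mem_biUnion.2 ⟨B, hB, hxB⟩)
  have hAF : A ∈ F := hF.le_of_ge (hF.prop.insert hA hdisj) (Finset.subset_insert A F)
    (Finset.mem_insert_self A F)
  have hA_empty : A = ∅ := (Finset.disjoint_self_iff_empty A).1 (hdisj A hAF)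
  exact h𝒜 (hA_empty ▸ hA)

end IsPacking

theorem IsTransversal.exists_maximal_isPacking {T : Finset α} (hT : IsTransversal 𝒜 ↑T) :
    ∃ F, Maximal (IsPacking 𝒜) F := by
  have hbdd : BddAbove (Finset.card '' {F | IsPacking 𝒜 F}) :=
    ⟨T.card, Set.forall_mem_image.2 fun _ hF => hF.card_le_card_of_isTransversal hT⟩
  obtain ⟨_, ⟨F, hF, rfl⟩, hmax⟩ :=
    hbdd.exists_isGreatest_of_nonempty ⟨_, ∅, isPacking_empty, rfl⟩
  exact ⟨F, hF, fun F' hF' hle =>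
    (Finset.eq_of_subset_of_card_le hle (hmax ⟨F', hF', rfl⟩)).ge⟩

end Packing

theorem exists_fin_embedding_map_eq {β : Type*} (s : Finset β) :
    ∃ e : Fin s.card ↪ β, Finset.univ.map e = s :=
  ⟨s.equivFin.symm.toEmbedding.trans (.subtype (· ∈ s)), by
    rw [← Finset.map_map, Finset.map_univ_equiv, Finset.univ_eq_attach]
    exact Finset.attach_map_val⟩

section Claw

variable {V : Type*} [DecidableEq V] {G : SimpleGraph V}

/-- The family of the vertex sets of the induced claws of `G`; its transversals are the proper
interval deletion sets. -/
def inducedClawSets (G : SimpleGraph V) : Set (Finset V) :=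
  {Q | ∃ c a b d : V, Q = {c, a, b, d} ∧ InducedClaw G c a b d}

theorem InducedClaw.card_eq_four {c a b d : V} (h : InducedClaw G c a b d) :
    ({c, a, b, d} : Finset V).card = 4 := by
  obtain ⟨hca, hcb, hcd, -, -, -, hab, had, hbd⟩ := h
  exact Finset.card_eq_four.2 ⟨c, a, b, d, hca.ne, hcb.ne, hcd.ne, hab, had, hbd, rfl⟩

theorem card_eq_four_of_mem_inducedClawSets {Q : Finset V} (hQ : Q ∈ inducedClawSets G) :
    Q.card = 4 := by
  obtain ⟨c, a, b, d, rfl, h⟩ := hQ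
  exact h.card_eq_four

theorem properIntervalDeletionSet_iff_isTransversal {D : Set V} :
    ProperIntervalDeletionSet G D ↔ IsTransversal (inducedClawSets G) D := by
  constructor
  · rintro hD _ ⟨c, a, b, d, rfl, h⟩
    by_contra! hmiss
    exact hD ⟨c, a, b, d, fun hc => hmiss c hc (by simp), fun ha => hmiss a ha (by simp),
      fun hb => hmiss b hb (by simp), fun hd => hmiss d hd (by simp), h⟩
  · rintro hD ⟨c, a, b, d, hc, ha, hb, hd, h⟩
    obtain ⟨x, hxD, hx⟩ := hD _ ⟨c, a, b, d, rfl, h⟩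
    simp only [Finset.mem_insert, Finset.mem_singleton] at hx
    rcases hx with rfl | rfl | rfl | rfl <;> contradiction

end Claw

theorem stmt0_general {V : Type*} [DecidableEq V] (G : SimpleGraph V) (k : ℕ)
    (hk : IsLeast {n : ℕ | ∃ D : Finset V, ProperIntervalDeletionSet G ↑D ∧ D.card = n} k) :
    ∃ D : Finset V, ProperIntervalDeletionSet G ↑D ∧ k ≤ D.card ∧ D.card ≤ 4 * k ∧
      ∃ (m : ℕ) (Q : Fin m → Finset V),
        D.card = 4 * m ∧
        (∀ i, (Q i).card = 4) ∧
        (∀ i j, i ≠ j → Disjoint (Q i) (Q j)) ∧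
        (∀ i, ∃ c a b d : V, Q i = {c, a, b, d} ∧ InducedClaw G c a b d) ∧
        D = Finset.univ.biUnion Q := by
  obtain ⟨⟨D₀, hD₀, rfl⟩, hmin⟩ := hk
  have hT := properIntervalDeletionSet_iff_isTransversal.1 hD₀
  obtain ⟨F, hF⟩ := hT.exists_maximal_isPacking
  have hdel := properIntervalDeletionSet_iff_isTransversal.2
    (IsPacking.isTransversal_biUnion_of_maximal hF hT.empty_notMem)
  have hcard : (F.biUnion id).card = 4 * F.card :=
    hF.prop.card_biUnion fun _ => card_eq_four_of_mem_inducedClawSets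
  have hle : F.card ≤ D₀.card := hF.prop.card_le_card_of_isTransversal hT
  obtain ⟨Q, hQ⟩ := exists_fin_embedding_map_eq F
  have hQF (i) : Q i ∈ F := hQ.le (Finset.mem_map_of_mem Q (Finset.mem_univ i))
  have hclaw (i) : Q i ∈ inducedClawSets G := hF.prop.subset (hQF i)
  have hunion : F.biUnion id = Finset.univ.biUnion Q :=
    calc
      F.biUnion id = (Finset.univ.map Q).biUnion id := by rw [hQ]
      _ = Finset.univ.biUnion Q := by
        rw [Finset.map_eq_image, Finset.image_biUnion]
        rfl
  exact ⟨F.biUnion id, hdel, hmin ⟨_, hdel, rfl⟩, by omega, F.card, Q, hcard,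
    fun i => card_eq_four_of_mem_inducedClawSets (hclaw i),
    fun i j hij => hF.prop.pairwiseDisjoint (hQF i) (hQF j) (Q.injective.ne hij), hclaw, hunion⟩

theorem stmt0 {V : Type*} [Fintype V] [DecidableEq V]
    (G : SimpleGraph V) (l r : V → ℝ)
    (hlr : ∀ v : V, l v < r v)
    (hinjl : Function.Injective l) (hinjr : Function.Injective r)
    (hlrne : ∀ u v : V, l u ≠ r v)
    (hadj : ∀ u v : V, G.Adj u v ↔ u ≠ v ∧ l u ≤ r v ∧ l v ≤ r u)
    (k : ℕ)
    (hk : IsLeast {n : ℕ | ∃ D : Finset V, ProperIntervalDeletionSet G ↑D ∧ D.card = n} k) :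
    ∃ D : Finset V, ProperIntervalDeletionSet G ↑D ∧ k ≤ D.card ∧ D.card ≤ 4 * k ∧
      ∃ (m : ℕ) (Q : Fin m → Finset V),
        D.card = 4 * m ∧
        (∀ i, (Q i).card = 4) ∧
        (∀ i j, i ≠ j → Disjoint (Q i) (Q j)) ∧
        (∀ i, ∃ c a b d : V, Q i = {c, a, b, d} ∧ InducedClaw G c a b d) ∧
        D = Finset.univ.biUnion Q :=
  stmt0_general G k hk
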